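/- Let u : [0,L] → ℝ³ be six times continuously differentiable and suppose that the first variation of Ψ vanishes for every smooth variation δu compactly supported in the open interval (0,L); that is, (d/ds)|_{s=0} Ψ(u + s δu) = 0 for all such variations. Then for every i ∈ {1,2,3} and every X¹ ∈ (0,L): −a (u^i)″ + b (u^i)^{(4)} − c (u^i)^{(6)} = (f̂₀)_i. -/

import Mathlib

open Filter Set intervalIntegral

/-- The holonomic total energy
`Ψ(u) = ∫₀ᴸ [ (a/2)Σ_i((u^i)′)² + (b/2)Σ_i((u^i)″)² + (c/2)Σ_i((u^i)‴)² − (f̂₀)_i u^i ] dX¹`. -/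
noncomputable def PsiHolo (L a b c : ℝ) (f₀ : ℝ → Fin 3 → ℝ) (u : ℝ → Fin 3 → ℝ) : ℝ :=
  ∫ t in (0:ℝ)..L,
    (a / 2 * ∑ i : Fin 3, (deriv (fun s => u s i) t) ^ 2
      + b / 2 * ∑ i : Fin 3, (iteratedDeriv 2 (fun s => u s i) t) ^ 2
      + c / 2 * ∑ i : Fin 3, (iteratedDeriv 3 (fun s => u s i) t) ^ 2
      - ∑ i : Fin 3, f₀ t i * u t i)

lemma aux_zero {g : ℝ → ℝ} {x : ℝ} (m : ℕ) (hx : x ∉ tsupport g) : iteratedDeriv m g x = 0 := by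
  have h : iteratedFDeriv ℝ m g x = 0 := by
    by_contra h
    exact hx (support_iteratedFDeriv_subset (𝕜 := ℝ) m h)
  simp [iteratedDeriv, h]

lemma aux_ibp {L : ℝ} {w g : ℝ → ℝ} (k m : ℕ) (hw : ContDiff ℝ ((k + 1 : ℕ) : ℕ∞) w)
    (hg : ContDiff ℝ (⊤ : ℕ∞) g) (hs : tsupport g ⊆ Ioo 0 L) :
    ∫ t in (0:ℝ)..L, iteratedDeriv k w t * iteratedDeriv (m+1) g t =
      - ∫ t in (0:ℝ)..L, iteratedDeriv (k+1) w t * iteratedDeriv m g t := by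
  have h0 : iteratedDeriv m g 0 = 0 := aux_zero m fun h => by simpa using (hs h).1
  have h1 : iteratedDeriv m g L = 0 := aux_zero m fun h => by simpa using (hs h).2
  have cg : ∀ n : ℕ, Continuous (iteratedDeriv n g) := fun n =>
    hg.continuous_iteratedDeriv n (by exact_mod_cast le_top)
  have dw : Differentiable ℝ (iteratedDeriv k w) :=
    hw.differentiable_iteratedDeriv k (by exact_mod_cast Nat.lt_succ_self k)
  have dg : Differentiable ℝ (iteratedDeriv m g) :=
    hg.differentiable_iteratedDeriv m (by exact_mod_cast WithTop.coe_lt_top m)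
  have cw : Continuous (iteratedDeriv (k+1) w) := hw.continuous_iteratedDeriv (k+1) (by exact_mod_cast le_rfl)
  have := integral_mul_deriv_eq_deriv_mul (a := 0) (b := L) (u := iteratedDeriv k w)
    (v := iteratedDeriv m g) (u' := iteratedDeriv (k+1) w) (v' := iteratedDeriv (m+1) g)
    (fun x _ => by rw [iteratedDeriv_succ]; exact (dw x).hasDerivAt)
    (fun x _ => by rw [iteratedDeriv_succ]; exact (dg x).hasDerivAt)
    (cw.intervalIntegrable _ _) ((cg _).intervalIntegrable _ _)
  rw [this, h0, h1]; simp

lemma aux_lin {w g : ℝ → ℝ} (k : ℕ) (hw : ContDiff ℝ k w) (hg : ContDiff ℝ k g) (s t : ℝ) :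
    iteratedDeriv k (fun r => w r + s * g r) t = iteratedDeriv k w t + s * iteratedDeriv k g t := by
  rw [iteratedDeriv_fun_add hw.contDiffAt (contDiff_const.mul hg).contDiffAt,
    iteratedDeriv_const_mul_field]

lemma aux_quad (L : ℝ) {P Q R : ℝ → ℝ} (hP : Continuous P) (hQ : Continuous Q) (hR : Continuous R) :
    deriv (fun s : ℝ => ∫ t in (0:ℝ)..L, (P t + s * Q t + s ^ 2 * R t)) 0 =
      ∫ t in (0:ℝ)..L, Q t := by
  have : (fun s : ℝ => ∫ t in (0:ℝ)..L, (P t + s * Q t + s ^ 2 * R t)) = fun s =>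
      (∫ t in (0:ℝ)..L, P t) + s * (∫ t in (0:ℝ)..L, Q t) + s ^ 2 * ∫ t in (0:ℝ)..L, R t := by
    funext s
    rw [intervalIntegral.integral_add, intervalIntegral.integral_add,
      intervalIntegral.integral_const_mul, intervalIntegral.integral_const_mul] <;>
    exact Continuous.intervalIntegrable (by fun_prop) _ _
  rw [this]
  generalize (∫ t in (0:ℝ)..L, P t) = p
  generalize (∫ t in (0:ℝ)..L, Q t) = q
  generalize (∫ t in (0:ℝ)..L, R t) = r
  have h := (((hasDerivAt_id (0:ℝ)).mul_const q).const_add p).add (((hasDerivAt_id (0:ℝ)).pow 2).mul_const r)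
  have h2 : HasDerivAt (fun s : ℝ => p + s * q + s ^ 2 * r) q 0 := by
    have h3 : (1 * q + ((2 : ℕ) : ℝ) * (id (0:ℝ)) ^ (2 - 1) * 1 * r) = q := by simp
    rw [h3] at h
    exact h
  exact h2.deriv

lemma aux_var (L a b c : ℝ) (f₀ : ℝ → Fin 3 → ℝ) (hf₀ : ∀ i, Continuous (fun t => f₀ t i))
    (u v : ℝ → Fin 3 → ℝ) (hu : ∀ i, ContDiff ℝ 6 (fun t => u t i))
    (hv : ∀ i, ContDiff ℝ 6 (fun t => v t i)) :
    deriv (fun s : ℝ => PsiHolo L a b c f₀ (fun t i => u t i + s * v t i)) 0 =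
      ∫ t in (0:ℝ)..L, ∑ i : Fin 3,
       (a * (iteratedDeriv 1 (fun s => u s i) t * iteratedDeriv 1 (fun s => v s i) t)
        + b * (iteratedDeriv 2 (fun s => u s i) t * iteratedDeriv 2 (fun s => v s i) t)
        + c * (iteratedDeriv 3 (fun s => u s i) t * iteratedDeriv 3 (fun s => v s i) t)
        - f₀ t i * v t i) := by
  have e : ∀ k : ℕ, k ≤ 6 → ((k : ℕ) : WithTop ℕ∞) ≤ 6 := fun k hk => by exact_mod_cast hk
  have hcu : ∀ k : ℕ, k ≤ 6 → ∀ i, Continuous (iteratedDeriv k (fun s => u s i)) :=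
    fun k hk i => (hu i).continuous_iteratedDeriv k (e k hk)
  have hcv : ∀ k : ℕ, k ≤ 6 → ∀ i, Continuous (iteratedDeriv k (fun s => v s i)) :=
    fun k hk i => (hv i).continuous_iteratedDeriv k (e k hk)
  have c0 := fun i => (hu i).continuous
  have d0 := fun i => (hv i).continuous
  have c1 := hcu 1 (by norm_num)
  have c2 := hcu 2 (by norm_num)
  have c3 := hcu 3 (by norm_num)
  have d1 := hcv 1 (by norm_num)
  have d2 := hcv 2 (by norm_num)
  have d3 := hcv 3 (by norm_num)
  rw [← aux_quad L (P := fun t => ∑ i : Fin 3,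
       (a / 2 * iteratedDeriv 1 (fun s => u s i) t ^ 2
        + b / 2 * iteratedDeriv 2 (fun s => u s i) t ^ 2
        + c / 2 * iteratedDeriv 3 (fun s => u s i) t ^ 2 - f₀ t i * u t i))
      (R := fun t => ∑ i : Fin 3,
       (a / 2 * iteratedDeriv 1 (fun s => v s i) t ^ 2
        + b / 2 * iteratedDeriv 2 (fun s => v s i) t ^ 2
        + c / 2 * iteratedDeriv 3 (fun s => v s i) t ^ 2)) 
    (by exact continuous_finsetSum _ fun i _ => (((((c1 i).pow 2).const_mul _).add
      (((c2 i).pow 2).const_mul _)).add (((c3 i).pow 2).const_mul _)).sub ((hf₀ i).mul (c0 i)))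
    (by exact continuous_finsetSum _ fun i _ => (((((c1 i).mul (d1 i)).const_mul _).add
      (((c2 i).mul (d2 i)).const_mul _)).add (((c3 i).mul (d3 i)).const_mul _)).sub ((hf₀ i).mul (d0 i)))
    (by exact continuous_finsetSum _ fun i _ => ((((d1 i).pow 2).const_mul _).add
      (((d2 i).pow 2).const_mul _)).add (((d3 i).pow 2).const_mul _))]
  congr 1
  funext s
  unfold PsiHolo
  congr 1
  funext t
  have l : ∀ k : ℕ, k ≤ 6 → ∀ i, iteratedDeriv k (fun r => u r i + s * v r i) t =
      iteratedDeriv k (fun r => u r i) t + s * iteratedDeriv k (fun r => v r i) t := fun k hk i =>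
    aux_lin k ((hu i).of_le (e k hk)) ((hv i).of_le (e k hk)) s t
  simp only [← iteratedDeriv_one]
  simp only [l 1 (by norm_num), l 2 (by norm_num), l 3 (by norm_num), Fin.sum_univ_three]
  ring

/-- If `u` is six times continuously differentiable and the first variation
of the holonomic energy `Ψ` vanishes for every smooth variation compactly supported in
`(0, L)`, then `−a (u^i)″ + b (u^i)⁽⁴⁾ − c (u^i)⁽⁶⁾ = (f̂₀)_i` on `(0, L)`. -/
theorem statement7
    (L a b c : ℝ) (hL : 0 < L) (ha : 0 < a) (hb : 0 < b) (hc : 0 < c)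
    (f₀ : ℝ → Fin 3 → ℝ) (hf₀ : ∀ i, Continuous (fun t => f₀ t i))
    (u : ℝ → Fin 3 → ℝ) (hu : ∀ i, ContDiff ℝ 6 (fun t => u t i))
    (hvar : ∀ δu : ℝ → Fin 3 → ℝ,
      (∀ i, ContDiff ℝ (⊤ : ℕ∞) (fun t => δu t i)) →
      (∀ i, tsupport (fun t => δu t i) ⊆ Ioo (0:ℝ) L) →
      deriv (fun s : ℝ => PsiHolo L a b c f₀ (fun t i => u t i + s * δu t i)) 0 = 0) :
    ∀ t ∈ Ioo (0:ℝ) L, ∀ i : Fin 3,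
      -a * iteratedDeriv 2 (fun s => u s i) t
        + b * iteratedDeriv 4 (fun s => u s i) t
        - c * iteratedDeriv 6 (fun s => u s i) t = f₀ t i := by
  intro t ht i
  set w : ℝ → ℝ := fun s => u s i with hw
  have e : ∀ k : ℕ, k ≤ 6 → ((k : ℕ) : WithTop ℕ∞) ≤ 6 := fun k hk => by exact_mod_cast hk
  have cw : ∀ k : ℕ, k ≤ 6 → Continuous (iteratedDeriv k w) :=
    fun k hk => (hu i).continuous_iteratedDeriv k (e k hk)
  have c1 := cw 1 (by norm_num)
  have c2 := cw 2 (by norm_num)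
  have c3 := cw 3 (by norm_num)
  have c4 := cw 4 (by norm_num)
  have c6 := cw 6 (by norm_num)
  have cf := hf₀ i
  set E : ℝ → ℝ := fun t => -a * iteratedDeriv 2 w t + b * iteratedDeriv 4 w t
    - c * iteratedDeriv 6 w t - f₀ t i with hE
  have cE : Continuous E := by fun_prop
  have key : ∀ g : ℝ → ℝ, ContDiff ℝ (⊤ : ℕ∞) g → tsupport g ⊆ Ioo 0 L →
      ∫ t in (0:ℝ)..L, g t * E t = 0 := by
    intro g hg hs
    have dcg : ∀ n : ℕ, Continuous (iteratedDeriv n g) := fun n =>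
      hg.continuous_iteratedDeriv n (by exact_mod_cast le_top)
    have g0 := hg.continuous
    have g1 := dcg 1
    have g2 := dcg 2
    have g3 := dcg 3
    have hvf : ∀ j, (fun t => (fun t j => if j = i then g t else 0 : ℝ → Fin 3 → ℝ) t j) =
        if j = i then g else fun _ => 0 := by
      intro j; split_ifs with h <;> simp [h]
    have hsm : ∀ j, ContDiff ℝ (⊤ : ℕ∞)
        (fun t => (fun t j => if j = i then g t else 0 : ℝ → Fin 3 → ℝ) t j) := by
      intro j; rw [hvf]; split_ifs
      · exact hg
      · exact contDiff_const
    have h1 := hvar (fun t j => if j = i then g t else 0) hsm (by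
      intro j; rw [hvf]; split_ifs
      · exact hs
      · simp [tsupport])
    rw [aux_var L a b c f₀ hf₀ u _ hu (fun j => contDiff_infty.1 (hsm j) 6)] at h1
    have h2 : ∫ t in (0:ℝ)..L, (a * (iteratedDeriv 1 w t * iteratedDeriv 1 g t)
        + b * (iteratedDeriv 2 w t * iteratedDeriv 2 g t)
        + c * (iteratedDeriv 3 w t * iteratedDeriv 3 g t) - f₀ t i * g t) = 0 := by
      rw [← h1]
      congr 1
      funext t
      rw [Finset.sum_eq_single i]
      · simp [hw]
      · intro j _ hj
        simp [hj]
      · simp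
    have ib : ∀ k m : ℕ, k + 1 ≤ 6 → _ := fun k m hk =>
      aux_ibp (L := L) k m (w := w) (g := g) ((hu i).of_le (e _ hk)) hg hs
    have i1 := ib 1 0 (by norm_num)
    have i2 := (ib 2 1 (by norm_num)).trans (congrArg _ (ib 3 0 (by norm_num)))
    have i3 := (ib 3 2 (by norm_num)).trans (congrArg _ ((ib 4 1 (by norm_num)).trans
      (congrArg _ (ib 5 0 (by norm_num)))))
    simp only [Nat.reduceAdd, iteratedDeriv_zero] at i1 i2 i3
    rw [intervalIntegral.integral_sub, intervalIntegral.integral_add,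
      intervalIntegral.integral_add, intervalIntegral.integral_const_mul,
      intervalIntegral.integral_const_mul, intervalIntegral.integral_const_mul, i1, i2, i3] at h2
    · have : ∀ t, g t * E t = -a * (iteratedDeriv 2 w t * g t) + b * (iteratedDeriv 4 w t * g t)
          - c * (iteratedDeriv 6 w t * g t) - f₀ t i * g t := by
        intro t; simp only [hE]; ring
      simp only [this]
      rw [intervalIntegral.integral_sub, intervalIntegral.integral_sub,
        intervalIntegral.integral_add, intervalIntegral.integral_const_mul,
        intervalIntegral.integral_const_mul, intervalIntegral.integral_const_mul]
      · linarith
      all_goals exact Continuous.intervalIntegrable (by fun_prop) _ _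
    all_goals exact Continuous.intervalIntegrable (by fun_prop) _ _
  have hae := isOpen_Ioo.ae_eq_zero_of_integral_contDiff_smul_eq_zero (U := Ioo 0 L)
    (μ := MeasureTheory.volume) (f := E) (cE.locallyIntegrable.locallyIntegrableOn _) (by
      intro g hg _ hs
      have := key g hg hs
      rw [intervalIntegral.integral_of_le hL.le,
        MeasureTheory.setIntegral_eq_integral_of_forall_compl_eq_zero] at this
      · simpa using this
      · intro x hx
        have : g x = 0 := image_eq_zero_of_notMem_tsupport fun h => hx (Ioo_subset_Ioc_self (hs h))
        simp [this])
  have hae' : E =ᵐ[MeasureTheory.volume.restrict (Ioo 0 L)] (fun _ => 0) :=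
    (MeasureTheory.ae_restrict_iff' measurableSet_Ioo).2 hae
  have := MeasureTheory.Measure.eqOn_open_of_ae_eq hae' isOpen_Ioo cE.continuousOn
    continuousOn_const ht
  simp only [hE] at this
  linarith
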